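/- arXiv:1603.09263 — 4 statements merged into one kernel-verified Lean document; each statement's English description precedes it below -/
import Mathlib

section
/- Let Λ ⊂ ℂ^d be a full-rank lattice and let Σ be a Hermitian positive-definite d×d complex matrix. Then for every c ∈ ℂ^d one has ∑_{λ∈Λ} exp(−(λ−c)†Σ^{-1}(λ−c)) ≤ ∑_{λ∈Λ} exp(−λ†Σ^{-1}λ); consequently the supremum over c ∈ ℂ^d of ∑_{λ∈Λ} exp(−(λ−c)†Σ^{-1}(λ−c)) equals ∑_{λ∈Λ} exp(−λ†Σ^{-1}λ), i.e. the maximum of the Λ-periodic Gaussian sum is attained at the lattice points. -/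
open Matrix
open scoped ComplexOrder

/-!
Fix an inner product space norm and write `θ_t(c) = ∑_{x ∈ L} exp (-t ‖x - c‖²)`. The change of
variables `(l, m) = (r + x + y, x - y)`, with `r` running over representatives of `L / 2L`, turns
the parallelogram law into the duplication formula
`θ_t(p + q) θ_t(p - q) = ∑_r θ_{2t}(p - r/2) θ_{2t}(q - r/2)`.
Writing `θ_t(c)²`, `θ_t(0)²` and `θ_t(2c) θ_t(0)` in this way, the inequality
`2ab ≤ a² + b²` yields `2 θ_t(c)² ≤ θ_t(0)² + θ_t(2c) θ_t(0)`. Since `θ_t` is bounded, its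
supremum `B` satisfies `2 B² ≤ θ_t(0)² + B θ_t(0)`, that is, `B ≤ θ_t(0)`.
A positive-definite Hermitian form is the squared norm of a linear image of its argument.
-/

section Parity

variable {G : Type*} [AddCommGroup G]

theorem exists_bijective_add_two_nsmul [IsAddTorsionFree G] :
    ∃ R : Set G, Function.Bijective fun p : R × G => (p.1 : G) + 2 • p.2 := by
  let double : G →+ G := nsmulAddMonoidHom 2
  obtain ⟨R, hR, -⟩ := double.range.exists_isComplement_left 0
  have hdouble : Function.Injective double := nsmul_right_injective two_ne_zero
  exact ⟨R, Function.Bijective.comp hR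
    ((Equiv.refl R).prodCongr (AddMonoidHom.ofInjective hdouble).toEquiv).bijective⟩

theorem bijective_add_add_sub {R : Set G}
    (hR : Function.Bijective fun p : R × G => (p.1 : G) + 2 • p.2) :
    Function.Bijective fun p : R × G × G => ((p.1 : G) + p.2.1 + p.2.2, p.2.1 - p.2.2) := by
  constructor
  · rintro ⟨r, x, y⟩ ⟨r', x', y'⟩ h
    have hdiff : (r : G) + 2 • y = r' + 2 • y' := by grind
    have hry : (r, y) = (r', y') := hR.injective hdiff
    grind
  · rintro ⟨l, m⟩
    obtain ⟨⟨r, y⟩, hry⟩ := hR.surjective (l - m)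
    exact ⟨(r, m + y, y), Prod.ext (by grind) (add_sub_cancel_right m y)⟩

end Parity

theorem le_of_bddAbove_of_two_mul_sq_le {α : Type*} {f : α → ℝ} {g : α → α} {a : ℝ}
    (hf : BddAbove (Set.range f)) (ha : 0 ≤ a)
    (h : ∀ x, 2 * f x ^ 2 ≤ a ^ 2 + f (g x) * a) (x : α) : f x ≤ a := by
  set b := ⨆ x, f x
  have hle (x : α) : f x ≤ b := le_ciSup hf x
  refine (hle x).trans (le_of_not_gt fun hab => ?_)
  have hb : b ≤ √((a ^ 2 + b * a) / 2) := by
    have : Nonempty α := ⟨x⟩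
    refine ciSup_le fun y => Real.le_sqrt_of_sq_le ?_
    linarith [h y, mul_le_mul_of_nonneg_right (hle (g y)) ha]
  have hsq : b ^ 2 ≤ (a ^ 2 + b * a) / 2 := (Real.le_sqrt' (ha.trans_lt hab)).mp hb
  have hpos : 0 < (b - a) * (2 * b + a) := mul_pos (sub_pos.mpr hab) (by linarith)
  linarith

/-- The periodic Gaussian sum `θ_t(c) = ∑_{x ∈ L} exp (-t ‖x - c‖²)` of the lattice `L` at inverse
temperature `t`, as a function of the centre `c`. -/
noncomputable def gaussianSum {E : Type*} [SeminormedAddCommGroup E] (L : Submodule ℤ E)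
    (t : ℝ) (c : E) : ℝ :=
  ∑' x : L, Real.exp (-t * ‖(x : E) - c‖ ^ 2)

section Periodic

variable {E : Type*} [SeminormedAddCommGroup E] (L : Submodule ℤ E) (t : ℝ)

theorem gaussianSum_nonneg (c : E) : 0 ≤ gaussianSum L t c :=
  tsum_nonneg fun _ => (Real.exp_pos _).le

theorem gaussianSum_sub_mem {x : E} (hx : x ∈ L) (c : E) :
    gaussianSum L t (c - x) = gaussianSum L t c := by
  rw [gaussianSum, ← (Equiv.subRight (⟨x, hx⟩ : L)).tsum_eq]
  simp [gaussianSum]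

end Periodic

section Normed

variable {E : Type*} [NormedAddCommGroup E] [NormedSpace ℝ E] [FiniteDimensional ℝ E]
  (L : Submodule ℤ E) [DiscreteTopology L] {t : ℝ}

theorem summable_exp_neg_mul_norm_sub_sq (ht : 0 < t) (c : E) :
    Summable fun x : L => Real.exp (-t * ‖(x : E) - c‖ ^ 2) := by
  set n := Module.finrank ℤ L + 1
  have hpow := ZLattice.summable_norm_sub_inv_pow L (2 * n) (by lia) c
  refine .of_norm_bounded_eventually (hpow.mul_left (n.factorial / t ^ n)) ?_
  have hne : ∀ᶠ x : L in Filter.cofinite, (x : E) ≠ c :=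
    Subtype.val_injective.tendsto_cofinite (Set.finite_singleton c).compl_mem_cofinite
  filter_upwards [hne] with x hx
  have hnorm : 0 < ‖(x : E) - c‖ := norm_pos_iff.mpr (sub_ne_zero.mpr hx)
  calc ‖Real.exp (-t * ‖(x : E) - c‖ ^ 2)‖
      = (Real.exp (t * ‖(x : E) - c‖ ^ 2))⁻¹ := by
        rw [Real.norm_of_nonneg (Real.exp_pos _).le, neg_mul, Real.exp_neg]
    _ ≤ ((t * ‖(x : E) - c‖ ^ 2) ^ n / n.factorial)⁻¹ :=
        inv_anti₀ (by positivity) (Real.pow_div_factorial_le_exp _ (by positivity) n)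
    _ = n.factorial / t ^ n * ‖(x : E) - c‖⁻¹ ^ (2 * n) := by
        rw [mul_pow, ← pow_mul, inv_pow]
        field_simp

theorem hasSum_gaussianSum_mul_gaussianSum (ht : 0 < t) (u v : E) :
    HasSum (fun z : L × L =>
      Real.exp (-t * ‖(z.1 : E) - u‖ ^ 2) * Real.exp (-t * ‖(z.2 : E) - v‖ ^ 2))
      (gaussianSum L t u * gaussianSum L t v) := by
  have hu := summable_exp_neg_mul_norm_sub_sq L ht u
  have hv := summable_exp_neg_mul_norm_sub_sq L ht v
  exact hu.hasSum.mul hv.hasSum <|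
    hu.mul_of_nonneg hv (fun _ => (Real.exp_pos _).le) (fun _ => (Real.exp_pos _).le)

theorem gaussianSum_le_gaussianSum_div_four_zero (ht : 0 < t) (c : E) :
    gaussianSum L t c ≤ gaussianSum L (t / 4) 0 := by
  have : ProperSpace E := FiniteDimensional.proper_real E
  have : DiscreteTopology L.toAddSubgroup := ‹DiscreteTopology L›
  have hclosed : IsClosed (L : Set E) :=
    AddSubgroup.isClosed_of_discrete (H := L.toAddSubgroup)
  obtain ⟨x₀, hx₀, hnear⟩ := hclosed.exists_infDist_eq_dist ⟨0, L.zero_mem⟩ c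
  -- The centre `c - x₀` is at least as close to `0` as to any other lattice point.
  have hnorm (x : L) : ‖(x : E)‖ ≤ 2 * ‖(x : E) - (c - x₀)‖ := by
    have hle : ‖c - x₀‖ ≤ ‖(x : E) - (c - x₀)‖ :=
      calc ‖c - x₀‖ = Metric.infDist c L := by rw [hnear, dist_eq_norm]
        _ ≤ dist c (x + x₀) := Metric.infDist_le_dist_of_mem (L.add_mem x.2 hx₀)
        _ = ‖(x : E) - (c - x₀)‖ := by rw [dist_eq_norm', sub_sub_eq_add_sub]
    linarith [norm_le_norm_sub_add (x : E) (c - x₀)]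
  rw [← gaussianSum_sub_mem L t hx₀ c]
  refine (summable_exp_neg_mul_norm_sub_sq L ht _).tsum_le_tsum (fun x => ?_)
    (summable_exp_neg_mul_norm_sub_sq L (by positivity) 0)
  have hsq := pow_le_pow_left₀ (norm_nonneg _) (hnorm x) 2
  rw [Real.exp_le_exp, sub_zero]
  nlinarith

theorem bddAbove_range_gaussianSum (ht : 0 < t) : BddAbove (Set.range (gaussianSum L t)) :=
  ⟨_, Set.forall_mem_range.mpr (gaussianSum_le_gaussianSum_div_four_zero L ht)⟩

end Normed

section InnerProduct

variable {E : Type*} [NormedAddCommGroup E] [InnerProductSpace ℝ E] [FiniteDimensional ℝ E]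
  (L : Submodule ℤ E) [DiscreteTopology L] {t : ℝ}

theorem hasSum_gaussianSum_add_mul_gaussianSum_sub (ht : 0 < t) {R : Set L}
    (hR : Function.Bijective fun p : R × L × L => ((p.1 : L) + p.2.1 + p.2.2, p.2.1 - p.2.2))
    (p q : E) :
    HasSum (fun r : R => gaussianSum L (2 * t) (p - (2⁻¹ : ℝ) • (r : E)) *
        gaussianSum L (2 * t) (q - (2⁻¹ : ℝ) • (r : E)))
      (gaussianSum L t (p + q) * gaussianSum L t (p - q)) := by
  have hsum := (Equiv.ofBijective _ hR).hasSum_iff.mpr <|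
    hasSum_gaussianSum_mul_gaussianSum L ht (p + q) (p - q)
  refine hsum.prod_fiberwise fun r => ?_
  refine (hasSum_gaussianSum_mul_gaussianSum L (by positivity) _ _).congr_fun ?_
  rintro ⟨x, y⟩
  have hpar := parallelogram_law_with_norm ℝ ((x : E) - (p - (2⁻¹ : ℝ) • (r : E)))
    (y - (q - (2⁻¹ : ℝ) • (r : E)))
  have hadd : (x : E) - (p - (2⁻¹ : ℝ) • (r : E)) + (y - (q - (2⁻¹ : ℝ) • (r : E))) =
      r + x + y - (p + q) := by module
  have hsub : (x : E) - (p - (2⁻¹ : ℝ) • (r : E)) - (y - (q - (2⁻¹ : ℝ) • (r : E))) =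
      x - y - (p - q) := by module
  rw [hadd, hsub] at hpar
  simp only [Function.comp_apply, Equiv.ofBijective_apply, ← Real.exp_add, Submodule.coe_add,
    Submodule.coe_sub]
  congr 1
  linear_combination -t * hpar

theorem two_mul_gaussianSum_sq_le (ht : 0 < t) (c : E) :
    2 * gaussianSum L t c ^ 2 ≤
      gaussianSum L t 0 ^ 2 + gaussianSum L t ((2 : ℝ) • c) * gaussianSum L t 0 := by
  have : IsAddTorsionFree E := .of_isTorsionFree ℝ E
  have : IsAddTorsionFree L := .of_isTorsionFree ℤ L
  obtain ⟨R, hR⟩ := exists_bijective_add_two_nsmul (G := L)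
  have hdup := hasSum_gaussianSum_add_mul_gaussianSum_sub L ht (bijective_add_add_sub hR)
  have hle := hasSum_le (fun r => ?_) ((hdup c 0).mul_left 2) ((hdup c c).add (hdup 0 0))
  · simpa [← sq, two_smul, add_comm] using hle
  · rw [← mul_assoc, ← sq, ← sq]
    exact two_mul_le_add_sq _ _

theorem gaussianSum_le_gaussianSum_zero (ht : 0 < t) (c : E) :
    gaussianSum L t c ≤ gaussianSum L t 0 :=
  le_of_bddAbove_of_two_mul_sq_le (bddAbove_range_gaussianSum L ht) (gaussianSum_nonneg L t 0)
    (two_mul_gaussianSum_sq_le L ht) c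

theorem tsum_exp_neg_norm_sq_le_of_linearEquiv {V : Type*} [NormedAddCommGroup V] [NormedSpace ℝ V]
    (e : V ≃ₗ[ℝ] E) (M : Submodule ℤ V) [DiscreteTopology M] (c : V) :
    ∑' x : M, Real.exp (-‖e (x - c)‖ ^ 2) ≤ ∑' x : M, Real.exp (-‖e x‖ ^ 2) := by
  have : FiniteDimensional ℝ V := e.symm.finiteDimensional
  have : DiscreteTopology (ZLattice.comap ℝ M e.symm.toLinearMap) :=
    ZLattice.comap_discreteTopology ℝ M e.symm.toContinuousLinearEquiv.continuous e.symm.injective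
  have hsum (v : V) : ∑' x : M, Real.exp (-‖e (x - v)‖ ^ 2) =
      gaussianSum (ZLattice.comap ℝ M e.symm.toLinearMap) 1 (e v) := by
    rw [gaussianSum, ← (ZLattice.comap_equiv ℝ M e.symm).toEquiv.tsum_eq]
    simp
  rw [hsum c]
  refine (gaussianSum_le_gaussianSum_zero _ one_pos _).trans_eq ?_
  simpa using (hsum 0).symm

end InnerProduct

section PosDef

variable {𝕜 n : Type*} [RCLike 𝕜] [Fintype n]

open scoped MatrixOrder Matrix.Norms.L2Operator in
theorem exists_linearEquiv_norm_sq_eq_re_dotProduct {A : Matrix n n 𝕜} (hA : A.PosDef) :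
    ∃ e : (n → 𝕜) ≃ₗ[𝕜] EuclideanSpace 𝕜 n,
      ∀ x, ‖e x‖ ^ 2 = RCLike.re (star x ⬝ᵥ A *ᵥ x) := by
  classical
  obtain ⟨B, hB, rfl⟩ :=
    CStarAlgebra.isStrictlyPositive_iff_eq_star_mul_self.mp hA.isStrictlyPositive
  refine ⟨(B.toLinearEquiv' hB.invertible).trans (WithLp.linearEquiv 2 𝕜 (n → 𝕜)).symm,
    fun x => ?_⟩
  have hBx : star x ⬝ᵥ (star B * B) *ᵥ x = star (B *ᵥ x) ⬝ᵥ B *ᵥ x := by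
    rw [star_eq_conjTranspose, ← mulVec_mulVec, dotProduct_mulVec, star_mulVec]
  rw [hBx, norm_sq_eq_re_inner (𝕜 := 𝕜), EuclideanSpace.inner_eq_star_dotProduct, dotProduct_comm]
  rfl

theorem gaussian_lattice_sum_le_center_general [DecidableEq n] (L : Submodule ℤ (n → 𝕜))
    [DiscreteTopology L] {S : Matrix n n 𝕜} (hS : S.PosDef) :
    (∀ c : n → 𝕜,
      (∑' x : L, Real.exp (-(RCLike.re (star ((x : n → 𝕜) - c) ⬝ᵥ S⁻¹ *ᵥ ((x : n → 𝕜) - c))))) ≤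
        ∑' x : L, Real.exp (-(RCLike.re (star (x : n → 𝕜) ⬝ᵥ S⁻¹ *ᵥ (x : n → 𝕜))))) ∧
    (⨆ c : n → 𝕜,
      ∑' x : L, Real.exp (-(RCLike.re (star ((x : n → 𝕜) - c) ⬝ᵥ S⁻¹ *ᵥ ((x : n → 𝕜) - c))))) =
      ∑' x : L, Real.exp (-(RCLike.re (star (x : n → 𝕜) ⬝ᵥ S⁻¹ *ᵥ (x : n → 𝕜)))) := by
  obtain ⟨e, he⟩ := exists_linearEquiv_norm_sq_eq_re_dotProduct hS.inv
  simp only [← he]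
  have hle := tsum_exp_neg_norm_sq_le_of_linearEquiv (e.restrictScalars ℝ) L
  exact ⟨hle, IsGreatest.csSup_eq ⟨⟨0, by simp⟩, Set.forall_mem_range.mpr hle⟩⟩

end PosDef

/-- **The Λ-periodic Gaussian sum is maximized at lattice points.**
For a full-rank lattice `Λ ⊂ ℂ^d` and a Hermitian positive-definite matrix `Σ`,
for every `c ∈ ℂ^d` one has
`∑_{λ∈Λ} exp(−(λ−c)†Σ⁻¹(λ−c)) ≤ ∑_{λ∈Λ} exp(−λ†Σ⁻¹λ)`, and consequently the
supremum over `c` of the left-hand side equals the right-hand side. -/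
theorem gaussian_lattice_sum_le_center
    (d : ℕ)
    (L : Submodule ℤ (Fin d → ℂ)) [DiscreteTopology L]
    (hfull : Submodule.span ℝ (L : Set (Fin d → ℂ)) = ⊤)
    (S : Matrix (Fin d) (Fin d) ℂ) (hS : S.PosDef) :
    (∀ c : Fin d → ℂ,
      (∑' x : L, Real.exp (-(star ((x : Fin d → ℂ) - c) ⬝ᵥ S⁻¹ *ᵥ ((x : Fin d → ℂ) - c)).re)) ≤
        ∑' x : L, Real.exp (-(star (x : Fin d → ℂ) ⬝ᵥ S⁻¹ *ᵥ (x : Fin d → ℂ)).re)) ∧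
    (⨆ c : Fin d → ℂ,
      ∑' x : L, Real.exp (-(star ((x : Fin d → ℂ) - c) ⬝ᵥ S⁻¹ *ᵥ ((x : Fin d → ℂ) - c)).re)) =
      ∑' x : L, Real.exp (-(star (x : Fin d → ℂ) ⬝ᵥ S⁻¹ *ᵥ (x : Fin d → ℂ)).re) :=
  gaussian_lattice_sum_le_center_general L hS
end

section
/- Let Λ ⊂ ℂ^m be a full-rank lattice with covolume V(Λ), let c ∈ ℂ^m, and let Σ₁, Σ₂ be Hermitian positive-definite m×m complex matrices. Set Σ₀ = Σ₁ + Σ₂ and Σ₃ = (Σ₁^{-1} + Σ₂^{-1})^{-1}, and write f_{√Σ}(x) = π^{-m} det(Σ)^{-1} exp(−x†Σ^{-1}x). Suppose the flatness factor ε_Λ(√Σ₃) := sup_{x∈ℂ^m} | V(Λ) · ∑_{λ∈Λ} f_{√Σ₃}(x−λ) − 1 | satisfies ε_Λ(√Σ₃) ≤ ε for some ε ≤ 1/2. Define the discrete Gaussian weights D(λ) = f_{√Σ₁}(λ) / ∑_{λ'∈Λ+c} f_{√Σ₁}(λ') for λ ∈ Λ+c, and let g(x) = ∑_{λ∈Λ+c}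 D(λ) · f_{√Σ₂}(x−λ). Then for every x ∈ ℂ^m, (1−4ε)·f_{√Σ₀}(x) ≤ g(x) ≤ (1+4ε)·f_{√Σ₀}(x). -/
open Matrix MeasureTheory
open scoped ComplexOrder

/-- The circularly-symmetric complex Gaussian density with covariance `S`:
`f_{√S}(x) = π^{-m} det(S)^{-1} exp(−x†S⁻¹x)`. -/
noncomputable def complexGaussianDensity (m : ℕ) (S : Matrix (Fin m) (Fin m) ℂ)
    (x : Fin m → ℂ) : ℝ :=
  (Real.pi ^ m * S.det.re)⁻¹ * Real.exp (-(star x ⬝ᵥ S⁻¹ *ᵥ x).re)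

/-!
Completing the square gives `f_{√Σ₁}(y) f_{√Σ₂}(x - y) = f_{√Σ₀}(x) f_{√Σ₃}(t - y)` with
`t = Σ₁ Σ₀⁻¹ x`. Summing over `y ∈ Λ + c`, flatness at `t - c` says that the unnormalised density,
multiplied by `V(Λ)`, is within relative error `ε` of `f_{√Σ₀}(x)`. Integrating this over `x` shows
that the normalising constant, multiplied by `V(Λ)`, is within `ε` of `1`. The quotient is then
within relative error `2ε / (1 - ε) ≤ 4ε` of `f_{√Σ₀}(x)`.
-/

/-! ### Lattice sums and the flatness factor -/

section Lattice

variable {E F : Type*} [NormedAddCommGroup E] [NormedAddCommGroup F]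

/-- The `L`-periodic function `x ↦ ∑_{z ∈ L} f (x - z)` obtained by summing the translates of `f`
along `L`. -/
noncomputable def periodization (L : Submodule ℤ E) (f : E → F) (x : E) : F :=
  ∑' z : L, f (x - z)

/-- The flatness factor `sup_x |V(L) ∑_{z ∈ L} f (x - z) - 1|` of a density `f` on `E` with respect
to the lattice `L`. The supremum of an unbounded function is the junk value `0`. -/
noncomputable def flatnessFactor [MeasurableSpace E] (L : Submodule ℤ E) (f : E → ℝ)
    (μ : Measure E := by volume_tac) : ℝ :=
  ⨆ x, |ZLattice.covolume L μ * periodization L f x - 1|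

lemma periodization_sub_mem (L : Submodule ℤ E) (f : E → F) (x : E) {w : E} (hw : w ∈ L) :
    periodization L f (x - w) = periodization L f x := by
  unfold periodization
  rw [← (Equiv.addLeft (⟨w, hw⟩ : L)).tsum_eq (fun z : L ↦ f (x - z))]
  simp only [Equiv.coe_addLeft, Submodule.coe_add, sub_sub]

lemma norm_comp_sub_le_of_norm_le_inv_pow {f : E → F} {C : ℝ} {n : ℕ}
    (hf : ∀ y, ‖f y‖ ≤ C * (1 + ‖y‖)⁻¹ ^ n) (x z : E) :
    ‖f (x - z)‖ ≤ C * (1 + ‖x‖) ^ n * (1 + ‖z‖)⁻¹ ^ n := by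
  have hC : 0 ≤ C := (norm_nonneg (f 0)).trans (by simpa using hf 0)
  have peetre : 1 + ‖z‖ ≤ (1 + ‖x‖) * (1 + ‖x - z‖) := by
    have := norm_sub_norm_le z x
    rw [norm_sub_rev] at this
    nlinarith [mul_nonneg (norm_nonneg x) (norm_nonneg (x - z))]
  calc ‖f (x - z)‖ ≤ C * (1 + ‖x - z‖)⁻¹ ^ n := hf _
    _ ≤ C * ((1 + ‖x‖) * (1 + ‖z‖)⁻¹) ^ n := by
      gcongr
      rwa [← div_eq_mul_inv, inv_le_comm₀ (by positivity) (by positivity), inv_div,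
        div_le_iff₀' (by positivity)]
    _ = C * (1 + ‖x‖) ^ n * (1 + ‖z‖)⁻¹ ^ n := by rw [mul_pow, mul_assoc]

variable [NormedSpace ℝ E] [FiniteDimensional ℝ E] (L : Submodule ℤ E) [DiscreteTopology L]

lemma summable_inv_one_add_norm_pow {n : ℕ} (hn : Module.finrank ℤ L < n) :
    Summable fun z : L ↦ (1 + ‖(z : E)‖)⁻¹ ^ n := by
  refine (ZLattice.summable_norm_pow_inv L n hn).of_norm_bounded_eventually ?_
  filter_upwards [(Set.finite_singleton (0 : L)).compl_mem_cofinite] with z hz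
  have : 0 < ‖z‖ := norm_pos_iff.2 hz
  rw [Real.norm_of_nonneg (by positivity)]
  gcongr
  exact le_add_of_nonneg_left zero_le_one

variable {f : E → F} {C : ℝ} {n : ℕ}

lemma summable_comp_sub_of_norm_le_inv_pow [CompleteSpace F] (hn : Module.finrank ℤ L < n)
    (hf : ∀ y, ‖f y‖ ≤ C * (1 + ‖y‖)⁻¹ ^ n) (x : E) : Summable fun z : L ↦ f (x - z) :=
  ((summable_inv_one_add_norm_pow L hn).mul_left _).of_norm_bounded
    fun z ↦ norm_comp_sub_le_of_norm_le_inv_pow hf x z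

lemma exists_norm_periodization_le [IsZLattice ℝ L] (hn : Module.finrank ℤ L < n)
    (hf : ∀ y, ‖f y‖ ≤ C * (1 + ‖y‖)⁻¹ ^ n) : ∃ M, ∀ x, ‖periodization L f x‖ ≤ M := by
  let b := (Module.Free.chooseBasis ℤ L).ofZLatticeBasis ℝ L
  have floor_mem (x : E) : (ZSpan.floor b x : E) ∈ L :=
    (Module.Basis.ofZLatticeBasis_span ℝ L _).le (ZSpan.floor b x).2
  have hC : 0 ≤ C := (norm_nonneg (f 0)).trans (by simpa using hf 0)
  refine ⟨∑' z : L, C * (1 + ∑ i, ‖b i‖) ^ n * (1 + ‖(z : E)‖)⁻¹ ^ n, fun x ↦ ?_⟩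
  rw [← periodization_sub_mem L f x (floor_mem x), ← ZSpan.fract_apply]
  refine tsum_of_norm_bounded
    ((summable_inv_one_add_norm_pow L hn).mul_left _).hasSum fun z ↦ ?_
  refine (norm_comp_sub_le_of_norm_le_inv_pow hf _ _).trans ?_
  gcongr
  exact ZSpan.norm_fract_le b x

lemma abs_covolume_mul_periodization_sub_one_le [IsZLattice ℝ L] [MeasurableSpace E]
    {f : E → ℝ} (hn : Module.finrank ℤ L < n) (hf : ∀ y, ‖f y‖ ≤ C * (1 + ‖y‖)⁻¹ ^ n)
    (μ : Measure E) (x : E) :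
    |ZLattice.covolume L μ * periodization L f x - 1| ≤ flatnessFactor L f μ := by
  obtain ⟨M, hM⟩ := exists_norm_periodization_le L hn hf
  refine le_ciSup (f := fun x ↦ |ZLattice.covolume L μ * periodization L f x - 1|)
    ⟨|ZLattice.covolume L μ| * M + 1, ?_⟩ x
  rintro _ ⟨y, rfl⟩
  refine (abs_sub _ _).trans ?_
  rw [abs_mul, abs_one]
  gcongr
  exact hM y

end Lattice

/-! ### Mixtures of translates -/

section Mixture

variable {E ι : Type*} [AddGroup E]

/-- The mixture `x ↦ ∑ᵢ wᵢ q (x - aᵢ)`: the density of the sum of a discrete random variable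
taking the value `aᵢ` with probability `wᵢ` and an independent one with density `q`. The weights
need not be normalised. -/
noncomputable def mixtureDensity (w : ι → ℝ) (a : ι → E) (q : E → ℝ) (x : E) : ℝ :=
  ∑' i, w i * q (x - a i)

lemma mixtureDensity_div_const (w : ι → ℝ) (a : ι → E) (q : E → ℝ) (C : ℝ) (x : E) :
    mixtureDensity (fun i ↦ w i / C) a q x = mixtureDensity w a q x / C := by
  simp only [mixtureDensity, ← tsum_div_const, div_mul_eq_mul_div]

lemma abs_div_sub_le_of_abs_sub_le {A B r ε : ℝ} (hA : |A - r| ≤ ε * r) (hB : |B - 1| ≤ ε)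
    (hε : ε ≤ 1 / 2) : |A / B - r| ≤ 4 * ε * r := by
  have hB' : 1 / 2 ≤ B := by linarith [(abs_le.1 hB).1]
  have hεr : 0 ≤ ε * r := (abs_nonneg _).trans hA
  have hr : |r| * ε = ε * r := by
    rw [← abs_of_nonneg hεr, abs_mul, abs_of_nonneg ((abs_nonneg _).trans hB), mul_comm]
  have hnum : |A - r * B| ≤ 2 * (ε * r) := calc
    |A - r * B| = |(A - r) - r * (B - 1)| := by congr 1; ring
    _ ≤ |A - r| + |r| * |B - 1| := by rw [← abs_mul]; exact abs_sub _ _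
    _ ≤ ε * r + |r| * ε := by gcongr
    _ = 2 * (ε * r) := by rw [hr, two_mul]
  rw [div_sub' (by linarith), mul_comm B, abs_div, abs_of_pos (by linarith : 0 < B),
    div_le_iff₀ (by linarith)]
  nlinarith

variable [MeasurableSpace E] [MeasurableAdd E] {μ : Measure E} [μ.IsAddRightInvariant]
  [Countable ι] {w : ι → ℝ} {a : ι → E} {q r : E → ℝ} {V ε : ℝ}

lemma integral_mixtureDensity (hw : Summable w) (hq : Integrable q μ) :
    ∫ x, mixtureDensity w a q x ∂μ = (∑' i, w i) * ∫ x, q x ∂μ := by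
  unfold mixtureDensity
  rw [← integral_tsum_of_summable_integral_norm fun i ↦ (hq.comp_sub_right (a i)).const_mul (w i)]
  · simp only [integral_const_mul, integral_sub_right_eq_self q, tsum_mul_right]
  · simp only [norm_mul, integral_const_mul, integral_sub_right_eq_self fun x ↦ ‖q x‖]
    exact hw.norm.mul_right _

lemma abs_mul_tsum_sub_one_le (hw : Summable w) (hw₀ : ∑' i, w i ≠ 0)
    (hq : ∫ x, q x ∂μ = 1) (hr : ∫ x, r x ∂μ = 1)
    (h : ∀ x, |V * mixtureDensity w a q x - r x| ≤ ε * r x) : |V * ∑' i, w i - 1| ≤ ε := by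
  have hmix : ∫ x, mixtureDensity w a q x ∂μ = ∑' i, w i := by
    rw [integral_mixtureDensity hw (integrable_of_integral_eq_one hq), hq, mul_one]
  have hmix_int : Integrable (mixtureDensity w a q) μ :=
    .of_integral_ne_zero (hmix ▸ hw₀)
  have hr_int := integrable_of_integral_eq_one hr
  calc |V * ∑' i, w i - 1| = |∫ x, V * mixtureDensity w a q x - r x ∂μ| := by
        rw [integral_sub (hmix_int.const_mul V) hr_int, integral_const_mul, hmix, hr]
    _ ≤ ∫ x, ε * r x ∂μ := by
        rw [← Real.norm_eq_abs]
        exact norm_integral_le_of_norm_le (hr_int.const_mul ε) (.of_forall h)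
    _ = ε := by rw [integral_const_mul, hr, mul_one]

theorem abs_mixtureDensity_normalized_sub_le (hw : Summable w) (hw₀ : ∑' i, w i ≠ 0)
    (hq : ∫ x, q x ∂μ = 1) (hr : ∫ x, r x ∂μ = 1) (hε : ε ≤ 1 / 2)
    (h : ∀ x, |V * mixtureDensity w a q x - r x| ≤ ε * r x) (x : E) :
    |mixtureDensity (fun i ↦ w i / ∑' j, w j) a q x - r x| ≤ 4 * ε * r x := by
  have hV := abs_mul_tsum_sub_one_le hw hw₀ hq hr h
  have hV₀ : V ≠ 0 := by
    rintro rfl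
    norm_num at hV
    linarith
  rw [mixtureDensity_div_const, ← mul_div_mul_left _ _ hV₀]
  exact abs_div_sub_le_of_abs_sub_le (h x) hV hε

end Mixture

/-! ### Quadratic forms -/

section CompleteSquare

variable {n R : Type*} [Fintype n] [DecidableEq n] [CommRing R] {A B : Matrix n n R}

lemma inv_add_inv_inv_eq (hA : IsUnit A.det) (hB : IsUnit B.det) :
    (A⁻¹ + B⁻¹)⁻¹ = B * (A + B)⁻¹ * A := by
  rw [inv_add_inv (by simp only [isUnit_iff_isUnit_det, hA, hB]), Matrix.mul_inv_rev,
    Matrix.mul_inv_rev, nonsing_inv_nonsing_inv _ hA, nonsing_inv_nonsing_inv _ hB, mul_assoc]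

lemma det_add_mul_det_inv_add_inv_inv (hA : IsUnit A.det) (hB : IsUnit B.det)
    (hAB : IsUnit (A + B).det) : (A + B).det * (A⁻¹ + B⁻¹)⁻¹.det = A.det * B.det := by
  rw [inv_add_inv_inv_eq hA hB, det_mul, det_mul]
  linear_combination A.det * B.det * det_nonsing_inv_mul_det _ hAB

variable [StarRing R]

lemma star_dotProduct_inv_mulVec_mulVec_add (hA : A.IsHermitian) (hA' : IsUnit A.det)
    (p z : n → R) :
    star (A *ᵥ p + z) ⬝ᵥ A⁻¹ *ᵥ (A *ᵥ p + z) =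
      star p ⬝ᵥ A *ᵥ p + star p ⬝ᵥ z + star z ⬝ᵥ p + star z ⬝ᵥ A⁻¹ *ᵥ z := by
  have hp : A⁻¹ *ᵥ A *ᵥ p = p := by rw [mulVec_mulVec, nonsing_inv_mul _ hA', one_mulVec]
  have hz : A *ᵥ A⁻¹ *ᵥ z = z := by rw [mulVec_mulVec, mul_nonsing_inv _ hA', one_mulVec]
  have hstar (v : n → R) : star (A *ᵥ p) ⬝ᵥ v = star p ⬝ᵥ A *ᵥ v := by
    rw [star_mulVec, hA.eq, dotProduct_mulVec]
  simp only [star_add, mulVec_add, add_dotProduct, dotProduct_add, hp, hz, hstar]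
  ring

lemma star_dotProduct_inv_mulVec_add_sub (hA : A.IsHermitian) (hB : B.IsHermitian)
    (hA' : IsUnit A.det) (hB' : IsUnit B.det) (hAB : IsUnit (A + B).det) (x y : n → R) :
    star y ⬝ᵥ A⁻¹ *ᵥ y + star (x - y) ⬝ᵥ B⁻¹ *ᵥ (x - y) =
      star x ⬝ᵥ (A + B)⁻¹ *ᵥ x +
        star (A *ᵥ (A + B)⁻¹ *ᵥ x - y) ⬝ᵥ (A⁻¹ + B⁻¹) *ᵥ (A *ᵥ (A + B)⁻¹ *ᵥ x - y) := by
  set p := (A + B)⁻¹ *ᵥ x with hp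
  set z := A *ᵥ p - y with hz
  have hx : (A + B) *ᵥ p = x := by rw [hp, mulVec_mulVec, mul_nonsing_inv _ hAB, one_mulVec]
  have hy : y = A *ᵥ p + -z := by rw [hz]; abel
  have hxy : x - y = B *ᵥ p + z := by rw [← hx, add_mulVec, hz]; abel
  have hxp : star x ⬝ᵥ p = star p ⬝ᵥ A *ᵥ p + star p ⬝ᵥ B *ᵥ p := by
    rw [← hx, star_mulVec, (hA.add hB).eq, ← dotProduct_mulVec, add_mulVec, dotProduct_add]
  rw [hxy, hy, star_dotProduct_inv_mulVec_mulVec_add hA hA',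
    star_dotProduct_inv_mulVec_mulVec_add hB hB', hxp, add_mulVec, dotProduct_add]
  simp only [star_neg, neg_dotProduct, dotProduct_neg, mulVec_neg, neg_neg]
  ring

end CompleteSquare

section PosDef

variable {n 𝕜 : Type*} [Fintype n] [RCLike 𝕜]

open scoped MatrixOrder in
lemma exists_isUnit_det_and_eq_conjTranspose_mul_self [DecidableEq n] {A : Matrix n n 𝕜}
    (hA : A.PosDef) : ∃ B : Matrix n n 𝕜, IsUnit B.det ∧ A = Bᴴ * B := by
  obtain ⟨B, hB, rfl⟩ :=
    CStarAlgebra.isStrictlyPositive_iff_eq_star_mul_self.1 hA.isStrictlyPositive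
  exact ⟨B, (isUnit_iff_isUnit_det B).1 hB, rfl⟩

lemma re_star_dotProduct_conjTranspose_mul_self_mulVec (B : Matrix n n 𝕜) (x : n → 𝕜) :
    RCLike.re (star x ⬝ᵥ (Bᴴ * B) *ᵥ x) = ∑ i, ‖(B *ᵥ x) i‖ ^ 2 := by
  rw [← mulVec_mulVec, dotProduct_mulVec, ← star_mulVec, dotProduct, map_sum]
  refine Finset.sum_congr rfl fun i _ ↦ ?_
  rw [Pi.star_apply, RCLike.star_def, RCLike.conj_mul, ← RCLike.ofReal_pow, RCLike.ofReal_re]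

lemma exists_pos_mul_norm_sq_le_re_star_dotProduct_mulVec {A : Matrix n n 𝕜} (hA : A.PosDef) :
    ∃ a : ℝ, 0 < a ∧ ∀ x, a * ‖x‖ ^ 2 ≤ RCLike.re (star x ⬝ᵥ A *ᵥ x) := by
  classical
  obtain ⟨B, hB, rfl⟩ := exists_isUnit_det_and_eq_conjTranspose_mul_self hA
  let T : (n → 𝕜) →ₗ[𝕜] EuclideanSpace 𝕜 n :=
    (WithLp.linearEquiv 2 𝕜 (n → 𝕜)).symm ∘ₗ B.mulVecLin
  have hT : Function.Injective T :=
    (WithLp.linearEquiv 2 𝕜 (n → 𝕜)).symm.injective.comp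
      (mulVec_injective_iff_isUnit.2 ((isUnit_iff_isUnit_det B).2 hB))
  obtain ⟨K, hK, hTK⟩ := T.exists_antilipschitzWith (LinearMap.ker_eq_bot.2 hT)
  have hK_sq : (0 : ℝ) < K ^ 2 := pow_pos (NNReal.coe_pos.2 hK) 2
  refine ⟨((K : ℝ) ^ 2)⁻¹, inv_pos.2 hK_sq, fun x ↦ ?_⟩
  rw [inv_mul_le_iff₀ hK_sq]
  calc ‖x‖ ^ 2 ≤ (K * ‖T x‖) ^ 2 := by gcongr; exact hTK.le_mul_norm (map_zero T) x
    _ = K ^ 2 * ∑ i, ‖(B *ᵥ x) i‖ ^ 2 := by rw [mul_pow, EuclideanSpace.norm_sq_eq]; rfl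
    _ = K ^ 2 * RCLike.re (star x ⬝ᵥ (Bᴴ * B) *ᵥ x) := by
      rw [re_star_dotProduct_conjTranspose_mul_self_mulVec]

end PosDef

/-! ### Complex Gaussian integrals -/

section Integral

variable {n : Type*} [Fintype n]

lemma integral_exp_neg_sum_norm_sq :
    ∫ x : n → ℂ, Real.exp (-∑ i, ‖x i‖ ^ 2) = Real.pi ^ Fintype.card n := by
  have hℂ : ∫ z : ℂ, Real.exp (-‖z‖ ^ 2) = Real.pi := by
    simpa using GaussianFourier.integral_rexp_neg_mul_sq_norm (V := ℂ) one_pos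
  simp_rw [← Finset.sum_neg_distrib, Real.exp_sum]
  rw [integral_fintype_prod_volume_eq_pow fun z : ℂ ↦ Real.exp (-‖z‖ ^ 2), hℂ]

variable [DecidableEq n]

lemma integral_comp_mulVec {F : Type*} [NormedAddCommGroup F] [NormedSpace ℝ F]
    {B : Matrix n n ℂ} (hB : IsUnit B.det) (f : (n → ℂ) → F) :
    ∫ x, f (B *ᵥ x) = (‖B.det‖ ^ 2)⁻¹ • ∫ x, f x := by
  let T : (n → ℂ) →ₗ[ℝ] (n → ℂ) := B.toLin'.restrictScalars ℝ
  have hdet : LinearMap.det T = ‖B.det‖ ^ 2 := by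
    rw [LinearMap.det_restrictScalars, Algebra.norm_complex_apply, LinearMap.det_toLin',
      Complex.normSq_eq_norm_sq]
  have hdet₀ : LinearMap.det T ≠ 0 := by
    rw [hdet]
    exact pow_ne_zero 2 (norm_ne_zero_iff.2 hB.ne_zero)
  have hT : MeasurableEmbedding T :=
    (LinearMap.equivOfDetNeZero T hdet₀).toContinuousLinearEquiv.toHomeomorph.measurableEmbedding
  change ∫ x, f (T x) = _
  rw [← hT.integral_map, Measure.map_linearMap_addHaar_eq_smul_addHaar volume hdet₀,
    integral_smul_measure, hdet, ENNReal.toReal_ofReal (abs_nonneg _),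
    abs_of_nonneg (by positivity)]

lemma integral_exp_neg_re_star_dotProduct_mulVec {A : Matrix n n ℂ} (hA : A.PosDef) :
    ∫ x, Real.exp (-(star x ⬝ᵥ A *ᵥ x).re) = (A.det.re)⁻¹ * Real.pi ^ Fintype.card n := by
  obtain ⟨B, hB, rfl⟩ := exists_isUnit_det_and_eq_conjTranspose_mul_self hA
  have hdet : (Bᴴ * B).det.re = ‖B.det‖ ^ 2 := by
    rw [det_mul, det_conjTranspose, RCLike.star_def, Complex.conj_mul', ← Complex.ofReal_pow,
      Complex.ofReal_re]
  simp_rw [← RCLike.re_eq_complex_re, re_star_dotProduct_conjTranspose_mul_self_mulVec]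
  rw [integral_comp_mulVec hB fun y ↦ Real.exp (-∑ i, ‖y i‖ ^ 2), integral_exp_neg_sum_norm_sq,
    smul_eq_mul, RCLike.re_eq_complex_re, hdet]

end Integral

/-! ### The complex Gaussian density -/

section Density

lemma exists_exp_neg_mul_sq_le_inv_pow {a : ℝ} (ha : 0 < a) (n : ℕ) :
    ∃ C : ℝ, ∀ t : ℝ, 0 ≤ t → Real.exp (-(a * t ^ 2)) ≤ C * (1 + t)⁻¹ ^ n := by
  refine ⟨n.factorial * Real.exp (1 + (4 * a)⁻¹), fun t ht ↦ ?_⟩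
  have hpow : (1 + t) ^ n ≤ n.factorial * Real.exp (1 + t) := by
    rw [← div_le_iff₀' (by positivity)]
    exact Real.pow_div_factorial_le_exp _ (by positivity) n
  have hsquare : -(a * t ^ 2) + (1 + t) ≤ 1 + (4 * a)⁻¹ := by
    have : (4 * a)⁻¹ - t + a * t ^ 2 = (4 * a)⁻¹ * (2 * a * t - 1) ^ 2 := by field_simp; ring
    have : 0 ≤ (4 * a)⁻¹ * (2 * a * t - 1) ^ 2 := by positivity
    linarith
  rw [inv_pow, ← div_eq_mul_inv, le_div_iff₀ (by positivity)]
  calc Real.exp (-(a * t ^ 2)) * (1 + t) ^ n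
      ≤ Real.exp (-(a * t ^ 2)) * (n.factorial * Real.exp (1 + t)) := by gcongr
    _ = n.factorial * Real.exp (-(a * t ^ 2) + (1 + t)) := by rw [Real.exp_add _ (1 + t)]; ring
    _ ≤ n.factorial * Real.exp (1 + (4 * a)⁻¹) := by gcongr

lemma ofReal_re_det_of_isHermitian {n : Type*} [Fintype n] [DecidableEq n] {A : Matrix n n ℂ}
    (hA : A.IsHermitian) : (A.det.re : ℂ) = A.det :=
  Complex.conj_eq_iff_re.1 (by rw [← RCLike.star_def, ← det_conjTranspose, hA.eq])

lemma isUnit_det_of_posDef {n : Type*} [Fintype n] [DecidableEq n] {A : Matrix n n ℂ}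
    (hA : A.PosDef) : IsUnit A.det :=
  hA.det_pos.ne'.isUnit

variable {m : ℕ} {S S₁ S₂ : Matrix (Fin m) (Fin m) ℂ}

lemma complexGaussianDensity_pos (hS : S.PosDef) (x : Fin m → ℂ) :
    0 < complexGaussianDensity m S x := by
  have : 0 < S.det.re := (Complex.pos_iff.1 hS.det_pos).1
  unfold complexGaussianDensity
  positivity

lemma integral_complexGaussianDensity (hS : S.PosDef) :
    ∫ x, complexGaussianDensity m S x = 1 := by
  have hdet : 0 < S.det.re := (Complex.pos_iff.1 hS.det_pos).1
  have hinv : S⁻¹.det.re = (S.det.re)⁻¹ := by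
    rw [det_nonsing_inv, Ring.inverse_eq_inv', ← ofReal_re_det_of_isHermitian hS.isHermitian,
      ← Complex.ofReal_inv, Complex.ofReal_re, Complex.ofReal_re]
  unfold complexGaussianDensity
  rw [integral_const_mul, integral_exp_neg_re_star_dotProduct_mulVec hS.inv, hinv, Fintype.card_fin]
  field_simp

lemma exists_norm_complexGaussianDensity_le_inv_pow (hS : S.PosDef) (n : ℕ) :
    ∃ C, ∀ x, ‖complexGaussianDensity m S x‖ ≤ C * (1 + ‖x‖)⁻¹ ^ n := by
  obtain ⟨a, ha, hform⟩ := exists_pos_mul_norm_sq_le_re_star_dotProduct_mulVec hS.inv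
  obtain ⟨C, hC⟩ := exists_exp_neg_mul_sq_le_inv_pow ha n
  have hdet : 0 < S.det.re := (Complex.pos_iff.1 hS.det_pos).1
  refine ⟨(Real.pi ^ m * S.det.re)⁻¹ * C, fun x ↦ ?_⟩
  rw [Real.norm_of_nonneg (complexGaussianDensity_pos hS x).le, complexGaussianDensity, mul_assoc]
  gcongr
  calc Real.exp (-(star x ⬝ᵥ S⁻¹ *ᵥ x).re) ≤ Real.exp (-(a * ‖x‖ ^ 2)) := by
        gcongr
        exact hform x
    _ ≤ C * (1 + ‖x‖)⁻¹ ^ n := hC _ (norm_nonneg x)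

lemma complexGaussianDensity_mul_complexGaussianDensity_sub (hS₁ : S₁.PosDef) (hS₂ : S₂.PosDef)
    (x y : Fin m → ℂ) :
    complexGaussianDensity m S₁ y * complexGaussianDensity m S₂ (x - y) =
      complexGaussianDensity m (S₁ + S₂) x *
        complexGaussianDensity m (S₁⁻¹ + S₂⁻¹)⁻¹ (S₁ *ᵥ (S₁ + S₂)⁻¹ *ᵥ x - y) := by
  have hS₀ := hS₁.add hS₂
  have hS₃ := hS₁.inv.add hS₂.inv
  have hdet : S₁.det.re * S₂.det.re = (S₁ + S₂).det.re * (S₁⁻¹ + S₂⁻¹)⁻¹.det.re := by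
    have := det_add_mul_det_inv_add_inv_inv (isUnit_det_of_posDef hS₁) (isUnit_det_of_posDef hS₂)
      (isUnit_det_of_posDef hS₀)
    rw [← ofReal_re_det_of_isHermitian hS₁.1, ← ofReal_re_det_of_isHermitian hS₂.1,
      ← ofReal_re_det_of_isHermitian hS₀.1, ← ofReal_re_det_of_isHermitian hS₃.inv.1] at this
    exact_mod_cast this.symm
  have hform := congrArg Complex.re <| star_dotProduct_inv_mulVec_add_sub hS₁.1 hS₂.1
    (isUnit_det_of_posDef hS₁) (isUnit_det_of_posDef hS₂) (isUnit_det_of_posDef hS₀) x y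
  simp only [Complex.add_re] at hform
  have hnorm : (Real.pi ^ m * S₁.det.re)⁻¹ * (Real.pi ^ m * S₂.det.re)⁻¹ =
      (Real.pi ^ m * (S₁ + S₂).det.re)⁻¹ * (Real.pi ^ m * (S₁⁻¹ + S₂⁻¹)⁻¹.det.re)⁻¹ := by
    rw [← mul_inv, ← mul_inv, mul_mul_mul_comm, hdet, mul_mul_mul_comm]
  set z := S₁ *ᵥ (S₁ + S₂)⁻¹ *ᵥ x - y
  have hexp : Real.exp (-(star y ⬝ᵥ S₁⁻¹ *ᵥ y).re) *
        Real.exp (-(star (x - y) ⬝ᵥ S₂⁻¹ *ᵥ (x - y)).re) =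
      Real.exp (-(star x ⬝ᵥ (S₁ + S₂)⁻¹ *ᵥ x).re) *
        Real.exp (-(star z ⬝ᵥ (S₁⁻¹ + S₂⁻¹) *ᵥ z).re) := by
    rw [← Real.exp_add, ← Real.exp_add, ← neg_add, ← neg_add, hform]
  simp only [complexGaussianDensity, nonsing_inv_nonsing_inv _ (isUnit_det_of_posDef hS₃)]
  rw [mul_mul_mul_comm, hnorm, hexp, mul_mul_mul_comm]

variable (L : Submodule ℤ (Fin m → ℂ))

lemma mixtureDensity_complexGaussianDensity_coset (hS₁ : S₁.PosDef) (hS₂ : S₂.PosDef)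
    (c x : Fin m → ℂ) :
    mixtureDensity (fun z : L ↦ complexGaussianDensity m S₁ (z + c)) (fun z : L ↦ z + c)
        (complexGaussianDensity m S₂) x =
      complexGaussianDensity m (S₁ + S₂) x *
        periodization L (complexGaussianDensity m (S₁⁻¹ + S₂⁻¹)⁻¹)
          (S₁ *ᵥ (S₁ + S₂)⁻¹ *ᵥ x - c) := by
  simp only [mixtureDensity, periodization, ← tsum_mul_left, sub_sub, add_comm c,
    complexGaussianDensity_mul_complexGaussianDensity_sub hS₁ hS₂]

variable [DiscreteTopology L]

lemma summable_complexGaussianDensity_add (hS : S.PosDef) (c : Fin m → ℂ) :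
    Summable fun z : L ↦ complexGaussianDensity m S (z + c) := by
  obtain ⟨C, hC⟩ := exists_norm_complexGaussianDensity_le_inv_pow hS (Module.finrank ℤ L + 1)
  have := summable_comp_sub_of_norm_le_inv_pow L (Nat.lt_succ_self _) hC c
  simpa [Function.comp_def, add_comm] using (Equiv.neg L).summable_iff.2 this

lemma tsum_complexGaussianDensity_add_pos (hS : S.PosDef) (c : Fin m → ℂ) :
    0 < ∑' z : L, complexGaussianDensity m S (z + c) :=
  (summable_complexGaussianDensity_add L hS c).tsum_pos
    (fun _ ↦ (complexGaussianDensity_pos hS _).le) 0 (complexGaussianDensity_pos hS _)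

lemma abs_covolume_mul_mixtureDensity_sub_le [IsZLattice ℝ L] (hS₁ : S₁.PosDef) (hS₂ : S₂.PosDef)
    (c x : Fin m → ℂ) :
    |ZLattice.covolume L volume *
        mixtureDensity (fun z : L ↦ complexGaussianDensity m S₁ (z + c)) (fun z : L ↦ z + c)
          (complexGaussianDensity m S₂) x - complexGaussianDensity m (S₁ + S₂) x| ≤
      flatnessFactor L (complexGaussianDensity m (S₁⁻¹ + S₂⁻¹)⁻¹) *
        complexGaussianDensity m (S₁ + S₂) x := by
  have hpos := complexGaussianDensity_pos (hS₁.add hS₂) x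
  obtain ⟨C, hC⟩ := exists_norm_complexGaussianDensity_le_inv_pow (hS₁.inv.add hS₂.inv).inv
    (Module.finrank ℤ L + 1)
  rw [mixtureDensity_complexGaussianDensity_coset L hS₁ hS₂, mul_left_comm, ← mul_sub_one, abs_mul,
    abs_of_pos hpos, mul_comm]
  gcongr
  exact abs_covolume_mul_periodization_sub_one_le L (Nat.lt_succ_self _) hC volume _

end Density

/-- **A generalized Regev lemma.** Let `Λ ⊂ ℂ^m` be a full-rank lattice with covolume
`V(Λ)`, `c ∈ ℂ^m`, and `Σ₁, Σ₂` Hermitian positive-definite. Set `Σ₀ = Σ₁ + Σ₂` and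
`Σ₃ = (Σ₁⁻¹ + Σ₂⁻¹)⁻¹`. If the flatness factor
`ε_Λ(√Σ₃) = sup_x |V(Λ)·∑_{λ∈Λ} f_{√Σ₃}(x−λ) − 1|` is at most `ε ≤ 1/2`, then the density
`g(x) = ∑_{λ∈Λ+c} D(λ) f_{√Σ₂}(x−λ)` of the sum of a discrete Gaussian on `Λ+c` with
parameter `Σ₁` and an independent continuous Gaussian with covariance `Σ₂` satisfies
`(1−4ε) f_{√Σ₀}(x) ≤ g(x) ≤ (1+4ε) f_{√Σ₀}(x)` for every `x`. -/
theorem discrete_plus_continuous_gaussian_flatness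
    (m : ℕ)
    (L : Submodule ℤ (Fin m → ℂ)) [DiscreteTopology L]
    (hfull : Submodule.span ℝ (L : Set (Fin m → ℂ)) = ⊤)
    (c : Fin m → ℂ)
    (S₁ S₂ : Matrix (Fin m) (Fin m) ℂ) (hS₁ : S₁.PosDef) (hS₂ : S₂.PosDef)
    (ε : ℝ) (hε : ε ≤ 1 / 2)
    (hflat : (⨆ x : Fin m → ℂ,
        |ZLattice.covolume L volume *
            (∑' fl : L, complexGaussianDensity m (S₁⁻¹ + S₂⁻¹)⁻¹ (x - fl)) - 1|) ≤ ε)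
    (x : Fin m → ℂ) :
    (1 - 4 * ε) * complexGaussianDensity m (S₁ + S₂) x ≤
      (∑' fl : L, (complexGaussianDensity m S₁ ((fl : Fin m → ℂ) + c) /
            ∑' fl' : L, complexGaussianDensity m S₁ ((fl' : Fin m → ℂ) + c)) *
          complexGaussianDensity m S₂ (x - ((fl : Fin m → ℂ) + c))) ∧
    (∑' fl : L, (complexGaussianDensity m S₁ ((fl : Fin m → ℂ) + c) /
          ∑' fl' : L, complexGaussianDensity m S₁ ((fl' : Fin m → ℂ) + c)) *
        complexGaussianDensity m S₂ (x - ((fl : Fin m → ℂ) + c))) ≤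
      (1 + 4 * ε) * complexGaussianDensity m (S₁ + S₂) x := by
  have : IsZLattice ℝ L := ⟨hfull⟩
  have hS₀ := hS₁.add hS₂
  have hmix (y : Fin m → ℂ) :=
    (abs_covolume_mul_mixtureDensity_sub_le L hS₁ hS₂ c y).trans
      (mul_le_mul_of_nonneg_right hflat (complexGaussianDensity_pos hS₀ y).le)
  have hg := abs_le.1 <| abs_mixtureDensity_normalized_sub_le
    (summable_complexGaussianDensity_add L hS₁ c) (tsum_complexGaussianDensity_add_pos L hS₁ c).ne'
    (integral_complexGaussianDensity hS₂) (integral_complexGaussianDensity hS₀) hε hmix x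
  unfold mixtureDensity at hg
  constructor <;> linarith [hg.1, hg.2]
end

section
/- Let H ∈ ℂ^{n×m}, let ρ > 0, and let R ∈ ℂ^{m×m} be an invertible matrix with R†R = H†H + ρ^{-1}·I_m. Set F = R^{-†}H† ∈ ℂ^{m×n} (where R^{-†} denotes the inverse of R†). Then FH − R = −ρ^{-1}R^{-†}, and consequently ρ·(FH−R)(FH−R)† + F F† = I_m; equivalently, for σ_s, σ_w > 0 with ρ = σ_s²/σ_w², one has σ_s²·(FH−R)(FH−R)† + σ_w²·F F† = σ_w²·I_m. -/
open Matrix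

/-! Put `F = R^{-†}H†` and `E = FH − R`. Multiplying `H†H = R†R − c·I` on the left by `R^{-†}` gives
`E = −c·R^{-†}`. Since `F† = HR⁻¹`, we get `I − FF† = (R − FH)R⁻¹ = −ER⁻¹`, while
`E† = −c·R⁻¹` gives `EE† = −c·ER⁻¹ = c·(I − FF†)`. -/

theorem isHermitian_of_conjTranspose_mul_self_eq_add {ι ι' κ α : Type*} [Fintype ι] [Fintype ι']
    [NonUnitalRing α] [StarRing α] {A : Matrix ι κ α} {B : Matrix ι' κ α} {N : Matrix κ κ α}
    (h : Aᴴ * A = Bᴴ * B + N) : N.IsHermitian := by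
  rw [← sub_eq_of_eq_add' h]
  exact (isHermitian_conjTranspose_mul_self A).sub (isHermitian_conjTranspose_mul_self B)

section FeedforwardFilter

variable {ι κ α : Type*} [Fintype ι] [Fintype κ] [DecidableEq κ] [CommRing α] [StarRing α]

/-- The feedforward filter `F = R^{-†}H†` of an MMSE-GDFE receiver with channel matrix `H` and
feedback matrix `R`. Mathlib's matrix inverse makes it `0` when `R` is singular. -/
noncomputable def feedforwardFilter (H : Matrix ι κ α) (R : Matrix κ κ α) : Matrix κ ι α :=
  (Rᴴ)⁻¹ * Hᴴ

theorem feedforwardFilter_mul_conjTranspose_self (H : Matrix ι κ α) (R : Matrix κ κ α) :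
    feedforwardFilter H R * (feedforwardFilter H R)ᴴ = feedforwardFilter H R * H * R⁻¹ := by
  simp only [feedforwardFilter, conjTranspose_mul, conjTranspose_conjTranspose,
    conjTranspose_nonsing_inv, Matrix.mul_assoc]

variable {H : Matrix ι κ α} {R : Matrix κ κ α}

theorem feedforwardFilter_mul_sub {N : Matrix κ κ α} (hR : IsUnit R.det)
    (hRR : Rᴴ * R = Hᴴ * H + N) : feedforwardFilter H R * H - R = -((Rᴴ)⁻¹ * N) := by
  have hRH : IsUnit (Rᴴ).det := R.det_conjTranspose ▸ hR.star
  calc feedforwardFilter H R * H - R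
      = (Rᴴ)⁻¹ * (Hᴴ * H) - (Rᴴ)⁻¹ * (Rᴴ * R) := by
        rw [feedforwardFilter, Matrix.mul_assoc, nonsing_inv_mul_cancel_left _ _ hRH]
    _ = -((Rᴴ)⁻¹ * N) := by rw [hRR, Matrix.mul_add, sub_add_cancel_left]

theorem conjTranspose_feedforwardFilter_mul_sub {N : Matrix κ κ α} (hR : IsUnit R.det)
    (hRR : Rᴴ * R = Hᴴ * H + N) : (feedforwardFilter H R * H - R)ᴴ = -(N * R⁻¹) := by
  rw [feedforwardFilter_mul_sub hR hRR, conjTranspose_neg, conjTranspose_mul,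
    (isHermitian_of_conjTranspose_mul_self_eq_add hRR).eq, conjTranspose_nonsing_inv,
    conjTranspose_conjTranspose]

theorem feedforwardFilter_mul_sub_mul_conjTranspose_self {c : α} (hR : IsUnit R.det)
    (hRR : Rᴴ * R = Hᴴ * H + c • (1 : Matrix κ κ α)) :
    (feedforwardFilter H R * H - R) * (feedforwardFilter H R * H - R)ᴴ =
      c • (1 - feedforwardFilter H R * (feedforwardFilter H R)ᴴ) := by
  rw [conjTranspose_feedforwardFilter_mul_sub hR hRR, feedforwardFilter_mul_conjTranspose_self,
    smul_one_mul, Matrix.mul_neg, Matrix.mul_smul, Matrix.sub_mul, mul_nonsing_inv _ hR,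
    ← smul_neg, neg_sub]

theorem smul_mul_conjTranspose_self_add_smul_feedforwardFilter {a b c : α} (hR : IsUnit R.det)
    (hRR : Rᴴ * R = Hᴴ * H + c • (1 : Matrix κ κ α)) (hab : a * c = b) :
    a • ((feedforwardFilter H R * H - R) * (feedforwardFilter H R * H - R)ᴴ) +
        b • (feedforwardFilter H R * (feedforwardFilter H R)ᴴ) =
      b • (1 : Matrix κ κ α) := by
  rw [feedforwardFilter_mul_sub_mul_conjTranspose_self hR hRR, smul_smul, hab, ← smul_add,
    sub_add_cancel]

end FeedforwardFilter

theorem mmse_gdfe_covariance_identity_general {ι κ 𝕜 : Type*} [Fintype ι] [Fintype κ]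
    [DecidableEq κ] [Field 𝕜] [StarRing 𝕜] {H : Matrix ι κ 𝕜} {R : Matrix κ κ 𝕜} {a b ρ : 𝕜}
    (ha : a ≠ 0) (hb : b ≠ 0) (hρ : ρ = a / b) (hR : IsUnit R.det)
    (hRR : Rᴴ * R = Hᴴ * H + ρ⁻¹ • (1 : Matrix κ κ 𝕜)) :
    feedforwardFilter H R * H - R = -(ρ⁻¹ • (Rᴴ)⁻¹) ∧
    ρ • ((feedforwardFilter H R * H - R) * (feedforwardFilter H R * H - R)ᴴ) +
        feedforwardFilter H R * (feedforwardFilter H R)ᴴ = 1 ∧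
    a • ((feedforwardFilter H R * H - R) * (feedforwardFilter H R * H - R)ᴴ) +
        b • (feedforwardFilter H R * (feedforwardFilter H R)ᴴ) =
      b • (1 : Matrix κ κ 𝕜) := by
  have hρ_one : ρ * ρ⁻¹ = 1 := mul_inv_cancel₀ (hρ ▸ div_ne_zero ha hb)
  have hab : a * ρ⁻¹ = b := by rw [hρ, inv_div, mul_div_cancel₀ _ ha]
  refine ⟨?_, ?_, smul_mul_conjTranspose_self_add_smul_feedforwardFilter hR hRR hab⟩
  · simpa only [mul_smul_one] using feedforwardFilter_mul_sub hR hRR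
  · simpa only [one_smul] using
      smul_mul_conjTranspose_self_add_smul_feedforwardFilter hR hRR hρ_one

/-- **The MMSE-GDFE covariance identity.** Let `H ∈ ℂ^{n×m}`, `ρ > 0`, and let
`R ∈ ℂ^{m×m}` be invertible with `R†R = H†H + ρ⁻¹I`. Set `F = R^{-†}H†`. Then
`FH − R = −ρ⁻¹R^{-†}`, hence `ρ(FH−R)(FH−R)† + FF† = I`; equivalently, for
`σ_s, σ_w > 0` with `ρ = σ_s²/σ_w²`,
`σ_s²(FH−R)(FH−R)† + σ_w²FF† = σ_w²I`. -/
theorem mmse_gdfe_covariance_identity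
    (m n : ℕ) (H : Matrix (Fin n) (Fin m) ℂ)
    (σs σw : ℝ) (hσs : 0 < σs) (hσw : 0 < σw)
    (ρ : ℝ) (hρ : ρ = σs ^ 2 / σw ^ 2)
    (R : Matrix (Fin m) (Fin m) ℂ) (hR : IsUnit R.det)
    (hRR : Rᴴ * R = Hᴴ * H + ((ρ : ℂ)⁻¹) • (1 : Matrix (Fin m) (Fin m) ℂ)) :
    (Rᴴ)⁻¹ * Hᴴ * H - R = -((ρ : ℂ)⁻¹ • (Rᴴ)⁻¹) ∧
    (ρ : ℂ) • (((Rᴴ)⁻¹ * Hᴴ * H - R) * ((Rᴴ)⁻¹ * Hᴴ * H - R)ᴴ) +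
        ((Rᴴ)⁻¹ * Hᴴ) * ((Rᴴ)⁻¹ * Hᴴ)ᴴ = 1 ∧
    ((σs : ℂ) ^ 2) • (((Rᴴ)⁻¹ * Hᴴ * H - R) * ((Rᴴ)⁻¹ * Hᴴ * H - R)ᴴ) +
        ((σw : ℂ) ^ 2) • (((Rᴴ)⁻¹ * Hᴴ) * ((Rᴴ)⁻¹ * Hᴴ)ᴴ) =
      ((σw : ℂ) ^ 2) • (1 : Matrix (Fin m) (Fin m) ℂ) :=
  mmse_gdfe_covariance_identity_general (pow_ne_zero 2 (mod_cast hσs.ne'))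
    (pow_ne_zero 2 (mod_cast hσw.ne')) (mod_cast hρ) hR hRR
end

section
/- Let Λ ⊂ ℂ^m be a full-rank lattice, let σ_s, σ_w > 0 and ρ = σ_s²/σ_w², let H ∈ ℂ^{n×m}, and let R ∈ ℂ^{m×m} be invertible with R†R = H†H + ρ^{-1}I_m; set F = R^{-†}H†. Then for every t ∈ ℂ^m, (∑_{x∈Λ} exp(−‖x‖²/σ_s² + Re(t†(FH−R)x))) · exp(σ_w²‖F†t‖²/4) ≤ exp(σ_w²‖t‖²/4) · ∑_{x∈Λ} exp(−‖x‖²/σ_s²). (This expresses that the equivalent noise w' = (FH−R)x + Fw, with x drawn from the discrete Gaussian D_{Λ,σ_s} and w an independent circularly-symmetric complex Gaussian of variance σ_w² per entry, is sub-Gaussian with parameter σ_w.) -/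
open Matrix

/-!
Completing the square turns the moment generating function of a discrete Gaussian on `L` into
`exp (σ² ‖v‖² / 4)` times a shifted sum `f c = ∑ₓ exp (-k ‖x - c‖²)`, so the point is that `f` is
largest at `c = 0`. Rotating `L × L` by 45 degrees and applying AM-GM on each coset of `2L` gives
`2 (f c)² ≤ f (2c) f 0 + (f 0)²`. Hence `f (2c) ≤ f 0` implies `f c ≤ f 0`, and starting from the
`L`-periodicity of `f` the bound reaches every dyadic fraction of a lattice point. These are dense
in the real span of `L`, where lower semicontinuity of `f` concludes; outside the span, projecting
`c` orthogonally onto it only increases `f`.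

For the equivalent noise, `ρ (FH - R)(FH - R)† + FF† = I`, so the exponents contributed by the
signal and by the Gaussian noise add up to exactly that of `t`.
-/

open scoped ENNReal RealInnerProductSpace

lemma two_mul_mul_le_mul_self_add_mul_self (a b : ℝ≥0∞) : 2 * (a * b) ≤ a * a + b * b := by
  rcases eq_or_ne a ⊤ with rfl | ha
  · simp
  rcases eq_or_ne b ⊤ with rfl | hb
  · simp
  lift a to NNReal using ha
  lift b to NNReal using hb
  norm_cast
  simpa only [sq, mul_assoc] using two_mul_le_add_sq a b

section CosetSums

variable {G : Type*} [AddCommGroup G] (N : AddSubgroup G)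

lemma tsum_add_coe_eq_tsum_fiber (A : G → ℝ≥0∞) (u : G) :
    ∑' n : N, A (u + n) = ∑' v : (QuotientAddGroup.mk : G → G ⧸ N) ⁻¹' {↑u}, A v := by
  let e : N ≃ (QuotientAddGroup.mk : G → G ⧸ N) ⁻¹' {(u : G ⧸ N)} :=
    { toFun n := ⟨u + n, QuotientAddGroup.mk_add_of_mem u n.2⟩
      invFun v := ⟨-u + v, QuotientAddGroup.eq.mp v.2.symm⟩
      left_inv n := Subtype.ext (neg_add_cancel_left u n)
      right_inv v := Subtype.ext (add_neg_cancel_left u v) }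
  exact e.tsum_eq fun v => A v

lemma tsum_tsum_mul_add_coe_eq_tsum_quotient (A B : G → ℝ≥0∞) :
    ∑' u, ∑' n : N, A u * B (u + n) =
      ∑' d : G ⧸ N, (∑' u : QuotientAddGroup.mk ⁻¹' {d}, A u) *
        ∑' u : QuotientAddGroup.mk ⁻¹' {d}, B u := by
  rw [← ENNReal.tsum_fiberwise _ (QuotientAddGroup.mk : G → G ⧸ N)]
  refine tsum_congr fun d => ?_
  rw [← ENNReal.tsum_mul_right]
  refine tsum_congr fun u => ?_
  rw [ENNReal.tsum_mul_left, tsum_add_coe_eq_tsum_fiber, u.2]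

lemma two_mul_tsum_tsum_mul_add_coe_le (A B : G → ℝ≥0∞) :
    2 * ∑' u, ∑' n : N, A u * B (u + n) ≤
      ∑' u, ∑' n : N, A u * A (u + n) + ∑' u, ∑' n : N, B u * B (u + n) := by
  simp only [tsum_tsum_mul_add_coe_eq_tsum_quotient]
  rw [← ENNReal.tsum_mul_left, ← ENNReal.tsum_add]
  exact ENNReal.tsum_le_tsum fun d => two_mul_mul_le_mul_self_add_mul_self _ _

lemma two_mul_tsum_tsum_mul_add_two_nsmul_le [IsAddTorsionFree G] (A B : G → ℝ≥0∞) :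
    2 * ∑' u, ∑' y, A u * B (u + 2 • y) ≤
      ∑' u, ∑' y, A u * A (u + 2 • y) + ∑' u, ∑' y, B u * B (u + 2 • y) := by
  let e : G ≃+ (nsmulAddMonoidHom (α := G) 2).range :=
    AddMonoidHom.ofInjective (nsmul_right_injective two_ne_zero)
  have reindex (A B : G → ℝ≥0∞) (u : G) : ∑' y, A u * B (u + 2 • y) =
      ∑' n : (nsmulAddMonoidHom (α := G) 2).range, A u * B (u + n) :=
    e.toEquiv.tsum_eq fun n => A u * B (u + n)
  simp only [reindex]
  exact two_mul_tsum_tsum_mul_add_coe_le _ A B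

end CosetSums

section DyadicHull

variable {E : Type*} [AddCommGroup E] [Module ℝ E]

/-- The group `L[1/2]` of dyadic fractions of elements of `L`. -/
def dyadicHull (L : Submodule ℤ E) : AddSubgroup E where
  carrier := {c | ∃ n : ℕ, 2 ^ n • c ∈ L}
  zero_mem' := ⟨0, by simp⟩
  add_mem' := by
    rintro a b ⟨i, ha⟩ ⟨j, hb⟩
    refine ⟨i + j, ?_⟩
    rw [smul_add]
    refine add_mem ?_ ?_
    · rw [pow_add, mul_comm, mul_smul]
      exact nsmul_mem ha _
    · rw [pow_add, mul_smul]
      exact nsmul_mem hb _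
  neg_mem' := by
    rintro a ⟨i, ha⟩
    exact ⟨i, by simpa only [smul_neg] using neg_mem ha⟩

lemma inv_two_smul_mem_dyadicHull {L : Submodule ℤ E} {c : E} (hc : c ∈ dyadicHull L) :
    (2⁻¹ : ℝ) • c ∈ dyadicHull L := by
  obtain ⟨n, hn⟩ := hc
  refine ⟨n + 1, ?_⟩
  rwa [pow_succ, mul_smul, ← Nat.cast_smul_eq_nsmul ℝ 2, Nat.cast_ofNat,
    smul_inv_smul₀ two_ne_zero]

variable [TopologicalSpace E] [ContinuousSMul ℝ E]

lemma real_smul_mem_of_isClosed_of_inv_two_smul_mem {C : AddSubgroup E}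
    (hC : IsClosed (C : Set E)) (hhalf : ∀ x ∈ C, (2⁻¹ : ℝ) • x ∈ C) (r : ℝ) {x : E}
    (hx : x ∈ C) : r • x ∈ C := by
  let S : AddSubgroup ℝ := C.comap (LinearMap.toSpanSingleton ℝ E x).toAddMonoidHom
  have pow_mem (n : ℕ) : (2⁻¹ : ℝ) ^ n • x ∈ C := by
    induction n with
    | zero => simpa using hx
    | succ n ih => simpa only [pow_succ', mul_smul] using hhalf _ ih
  have hS_dense : Dense (S : Set ℝ) := by
    refine S.dense_of_not_isolated_zero fun ε hε => ?_
    obtain ⟨n, hn⟩ := exists_pow_lt_of_lt_one hε (two_inv_lt_one (α := ℝ))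
    exact ⟨2⁻¹ ^ n, pow_mem n, by positivity, hn⟩
  have hS_closed : IsClosed (S : Set ℝ) := hC.preimage (continuous_id.smul continuous_const)
  have hr : r ∈ (S : Set ℝ) := hS_closed.closure_eq ▸ hS_dense r
  exact hr

lemma span_real_subset_closure_dyadicHull [IsTopologicalAddGroup E] (L : Submodule ℤ E) :
    (Submodule.span ℝ (L : Set E) : Set E) ⊆ closure (dyadicHull L) := by
  let C : AddSubgroup E := (dyadicHull L).topologicalClosure
  have hhalf (x : E) (hx : x ∈ C) : (2⁻¹ : ℝ) • x ∈ C :=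
    map_mem_closure (continuous_const_smul _) hx fun _ => inv_two_smul_mem_dyadicHull
  intro c hc
  change c ∈ C
  induction hc using Submodule.span_induction with
  | mem x hx => exact subset_closure ⟨0, by simpa using hx⟩
  | zero => exact zero_mem C
  | add x y _ _ hx hy => exact add_mem hx hy
  | smul r x _ hx =>
    exact real_smul_mem_of_isClosed_of_inv_two_smul_mem isClosed_closure hhalf r hx

end DyadicHull

section GaussianMass

variable {E : Type*} [NormedAddCommGroup E]

/-- The unnormalised Gaussian density `exp (-k ‖x - c‖²)` centred at `c`, with values in `ℝ≥0∞` so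
that sums over a lattice need no summability hypothesis. -/
noncomputable def gaussianWeight (k : ℝ) (c x : E) : ℝ≥0∞ :=
  ENNReal.ofReal (Real.exp (-k * ‖x - c‖ ^ 2))

/-- The total mass that the Gaussian density centred at `c` gives to `L`; it is infinite when
the sum diverges. -/
noncomputable def gaussianMass (L : Submodule ℤ E) (k : ℝ) (c : E) : ℝ≥0∞ :=
  ∑' x : L, gaussianWeight k c x

lemma gaussianMass_eq_of_mem {L : Submodule ℤ E} (k : ℝ) {c : E} (hc : c ∈ L) :
    gaussianMass L k c = gaussianMass L k 0 := by
  unfold gaussianMass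
  rw [← (Equiv.addRight (⟨c, hc⟩ : L)).tsum_eq]
  simp [gaussianWeight]

lemma lowerSemicontinuous_gaussianMass (L : Submodule ℤ E) (k : ℝ) :
    LowerSemicontinuous (gaussianMass L k) := by
  refine lowerSemicontinuous_tsum fun x => Continuous.lowerSemicontinuous ?_
  exact ENNReal.continuous_ofReal.comp (by fun_prop)

lemma gaussianMass_zero_eq_ofReal_tsum {L : Submodule ℤ E} {k : ℝ}
    (hL : Summable fun x : L => Real.exp (-k * ‖(x : E)‖ ^ 2)) :
    gaussianMass L k 0 = ENNReal.ofReal (∑' x : L, Real.exp (-k * ‖(x : E)‖ ^ 2)) := by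
  rw [ENNReal.ofReal_tsum_of_nonneg (fun _ => (Real.exp_pos _).le) hL]
  simp only [gaussianMass, gaussianWeight, sub_zero]

variable [InnerProductSpace ℝ E] (L : Submodule ℤ E)

lemma gaussianWeight_mul_gaussianWeight (k : ℝ) (a b x y : E) :
    gaussianWeight k a x * gaussianWeight k b y =
      gaussianWeight (k / 2) (a - b) (x - y) * gaussianWeight (k / 2) (a + b) (x + y) := by
  have parallelogram := parallelogram_law_with_norm ℝ (x - a) (y - b)
  rw [sub_add_sub_comm, sub_sub_sub_comm] at parallelogram
  simp only [gaussianWeight, ← ENNReal.ofReal_mul (Real.exp_pos _).le, ← Real.exp_add]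
  congr 2
  linear_combination (k / 2) * parallelogram

lemma gaussianMass_mul_gaussianMass (k : ℝ) (a b : E) :
    gaussianMass L k a * gaussianMass L k b =
      ∑' u : L, ∑' y : L, gaussianWeight (k / 2) (a - b) (u : E) *
        gaussianWeight (k / 2) (a + b) ((u + 2 • y : L) : E) := by
  rw [ENNReal.tsum_comm, mul_comm, gaussianMass, gaussianMass, ← ENNReal.tsum_mul_right]
  refine tsum_congr fun y => ?_
  rw [← ENNReal.tsum_mul_left, ← (Equiv.addRight y).tsum_eq]
  refine tsum_congr fun u => ?_
  rw [mul_comm, gaussianWeight_mul_gaussianWeight]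
  congr 2
  · simp
  · simp only [Equiv.coe_addRight, Submodule.coe_add, two_nsmul, add_assoc]

lemma two_mul_gaussianMass_sq_le (k : ℝ) (c : E) :
    2 * gaussianMass L k c ^ 2 ≤
      gaussianMass L k (2 • c) * gaussianMass L k 0 + gaussianMass L k 0 ^ 2 := by
  have : IsAddTorsionFree E := .of_isTorsionFree ℝ E
  have : IsAddTorsionFree L := Subtype.val_injective.isAddTorsionFree L.subtype.toAddMonoidHom
  have key := two_mul_tsum_tsum_mul_add_two_nsmul_le (G := L)
    (fun u => gaussianWeight (k / 2) 0 (u : E)) (fun u => gaussianWeight (k / 2) (2 • c) (u : E))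
  have hcc := gaussianMass_mul_gaussianMass L k c c
  have hc0 := gaussianMass_mul_gaussianMass L k (2 • c) 0
  have h00 := gaussianMass_mul_gaussianMass L k 0 0
  simp only [sub_self, sub_zero, add_zero, ← two_nsmul c] at hcc hc0 h00
  rwa [← hcc, ← hc0, ← h00, ← sq, ← sq, add_comm] at key

lemma gaussianMass_le_of_two_nsmul_le {k : ℝ} {c : E}
    (h : gaussianMass L k (2 • c) ≤ gaussianMass L k 0) :
    gaussianMass L k c ≤ gaussianMass L k 0 := by
  have hsq : 2 * gaussianMass L k c ^ 2 ≤ 2 * gaussianMass L k 0 ^ 2 :=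
    calc
      _ ≤ gaussianMass L k (2 • c) * gaussianMass L k 0 + gaussianMass L k 0 ^ 2 :=
        two_mul_gaussianMass_sq_le L k c
      _ ≤ gaussianMass L k 0 * gaussianMass L k 0 + gaussianMass L k 0 ^ 2 := by gcongr
      _ = 2 * gaussianMass L k 0 ^ 2 := by ring
  rwa [ENNReal.mul_le_mul_iff_right two_ne_zero ENNReal.ofNat_ne_top,
    (ENNReal.pow_right_strictMono two_ne_zero).le_iff_le] at hsq

lemma gaussianMass_le_of_mem_dyadicHull (k : ℝ) {c : E} (hc : c ∈ dyadicHull L) :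
    gaussianMass L k c ≤ gaussianMass L k 0 := by
  obtain ⟨n, hn⟩ := hc
  induction n generalizing c with
  | zero => exact (gaussianMass_eq_of_mem k (by simpa using hn)).le
  | succ n ih =>
    refine gaussianMass_le_of_two_nsmul_le L (ih ?_)
    rwa [← mul_smul, ← pow_succ]

lemma gaussianMass_le_of_mem_closure_span (k : ℝ) {c : E}
    (hc : c ∈ (Submodule.span ℝ (L : Set E)).topologicalClosure) :
    gaussianMass L k c ≤ gaussianMass L k 0 := by
  have hclosed : IsClosed {c | gaussianMass L k c ≤ gaussianMass L k 0} :=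
    (lowerSemicontinuous_gaussianMass L k).isClosed_preimage _
  have hdyadic : closure (dyadicHull L : Set E) ⊆ {c | gaussianMass L k c ≤ gaussianMass L k 0} :=
    closure_minimal (fun _ => gaussianMass_le_of_mem_dyadicHull L k) hclosed
  exact hdyadic (closure_minimal (span_real_subset_closure_dyadicHull L) isClosed_closure hc)

lemma gaussianMass_le_starProjection {k : ℝ} (hk : 0 ≤ k) {V : Submodule ℝ E}
    [V.HasOrthogonalProjection] (hLV : (L : Set E) ⊆ V) (c : E) :
    gaussianMass L k c ≤ gaussianMass L k (V.starProjection c) := by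
  refine ENNReal.tsum_le_tsum fun x => ENNReal.ofReal_le_ofReal (Real.exp_le_exp.mpr ?_)
  have hproj : ‖(x : E) - V.starProjection c‖ ≤ ‖(x : E) - c‖ := by
    simpa only [map_sub, Submodule.starProjection_eq_self_iff.mpr (hLV x.2)]
      using V.norm_starProjection_apply_le ((x : E) - c)
  simp only [neg_mul, neg_le_neg_iff]
  gcongr

variable [CompleteSpace E]

theorem gaussianMass_le_gaussianMass_zero {k : ℝ} (hk : 0 ≤ k) (c : E) :
    gaussianMass L k c ≤ gaussianMass L k 0 := by
  let V := (Submodule.span ℝ (L : Set E)).topologicalClosure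
  have hLV : (L : Set E) ⊆ V := Submodule.subset_span.trans subset_closure
  exact (gaussianMass_le_starProjection L hk hLV c).trans
    (gaussianMass_le_of_mem_closure_span L k (V.starProjection_apply_mem c))

variable {L}

theorem tsum_exp_neg_mul_norm_sub_sq_le {k : ℝ} (hk : 0 ≤ k)
    (hL : Summable fun x : L => Real.exp (-k * ‖(x : E)‖ ^ 2)) (c : E) :
    ∑' x : L, Real.exp (-k * ‖(x : E) - c‖ ^ 2) ≤ ∑' x : L, Real.exp (-k * ‖(x : E)‖ ^ 2) := by
  have hmass := gaussianMass_le_gaussianMass_zero L hk c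
  rw [gaussianMass_zero_eq_ofReal_tsum hL] at hmass
  calc
    _ = (gaussianMass L k c).toReal := by
      simp [gaussianMass, gaussianWeight, ENNReal.tsum_toReal_eq, (Real.exp_pos _).le]
    _ ≤ _ := ENNReal.toReal_le_of_le_ofReal (tsum_nonneg fun _ => (Real.exp_pos _).le) hmass

theorem tsum_exp_neg_norm_sq_div_add_inner_le {σ : ℝ} (hσ : σ ≠ 0)
    (hL : Summable fun x : L => Real.exp (-‖(x : E)‖ ^ 2 / σ ^ 2)) (v : E) :
    ∑' x : L, Real.exp (-‖(x : E)‖ ^ 2 / σ ^ 2 + ⟪v, (x : E)⟫) ≤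
      Real.exp (σ ^ 2 * ‖v‖ ^ 2 / 4) * ∑' x : L, Real.exp (-‖(x : E)‖ ^ 2 / σ ^ 2) := by
  have complete_square (x : E) : -‖x‖ ^ 2 / σ ^ 2 + ⟪v, x⟫ =
      σ ^ 2 * ‖v‖ ^ 2 / 4 + -(σ ^ 2)⁻¹ * ‖x - (σ ^ 2 / 2) • v‖ ^ 2 := by
    rw [norm_sub_sq_real, inner_smul_right, norm_smul, mul_pow, Real.norm_eq_abs, sq_abs,
      real_inner_comm]
    field_simp
    ring
  have neg_div_sq (x : E) : -‖x‖ ^ 2 / σ ^ 2 = -(σ ^ 2)⁻¹ * ‖x‖ ^ 2 := by ring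
  simp only [complete_square, Real.exp_add, tsum_mul_left]
  simp only [neg_div_sq] at hL ⊢
  exact mul_le_mul_of_nonneg_left (tsum_exp_neg_mul_norm_sub_sq_le (by positivity) hL _)
    (Real.exp_pos _).le

end GaussianMass

lemma summable_exp_neg_mul_norm_sq {E : Type*} [NormedAddCommGroup E] [NormedSpace ℝ E]
    [FiniteDimensional ℝ E] (L : Submodule ℤ E) [DiscreteTopology L] {k : ℝ} (hk : 0 < k) :
    Summable fun x : L => Real.exp (-k * ‖(x : E)‖ ^ 2) := by
  let n := Module.finrank ℤ L + 1
  have hpow : Summable fun x : L => n.factorial / k ^ n * ‖x‖⁻¹ ^ (2 * n) :=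
    (ZLattice.summable_norm_pow_inv L (2 * n) (by lia)).mul_left _
  refine hpow.of_norm_bounded_eventually ?_
  filter_upwards [(Set.finite_singleton (0 : L)).compl_mem_cofinite] with x hx
  have hx0 : 0 < ‖x‖ := norm_pos_iff.mpr hx
  have hexp := Real.pow_div_factorial_le_exp (k * ‖x‖ ^ 2) (by positivity) n
  calc
    ‖Real.exp (-k * ‖x‖ ^ 2)‖ = (Real.exp (k * ‖x‖ ^ 2))⁻¹ := by
      rw [Real.norm_of_nonneg (Real.exp_pos _).le, neg_mul, Real.exp_neg]
    _ ≤ ((k * ‖x‖ ^ 2) ^ n / n.factorial)⁻¹ := inv_anti₀ (by positivity) hexp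
    _ = n.factorial / k ^ n * ‖x‖⁻¹ ^ (2 * n) := by
      rw [mul_pow, ← pow_mul, inv_pow]
      field_simp

section EquivalentNoise

variable {ι κ : Type*} [Fintype ι] [Fintype κ]

lemma norm_sq_toLp_conjTranspose_mulVec (A : Matrix ι κ ℂ) (t : ι → ℂ) :
    ‖WithLp.toLp 2 (Aᴴ *ᵥ t)‖ ^ 2 = (star t ⬝ᵥ (A * Aᴴ) *ᵥ t).re := by
  rw [← inner_self_eq_norm_sq (𝕜 := ℂ), EuclideanSpace.inner_toLp_toLp, dotProduct_comm,
    star_mulVec, conjTranspose_conjTranspose, ← dotProduct_mulVec, mulVec_mulVec]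
  rfl

lemma re_star_dotProduct_mulVec (A : Matrix ι κ ℂ) (t : ι → ℂ) (x : EuclideanSpace ℂ κ) :
    (star t ⬝ᵥ A *ᵥ (x : κ → ℂ)).re = ⟪WithLp.toLp 2 (Aᴴ *ᵥ t), x⟫ := by
  rw [dotProduct_mulVec, ← conjTranspose_conjTranspose A, ← star_mulVec,
    conjTranspose_conjTranspose, dotProduct, Complex.re_sum]
  simp [PiLp.inner_apply, Complex.inner, mul_comm]

variable [DecidableEq ι] {H : Matrix κ ι ℂ} {R : Matrix ι ι ℂ}

lemma smul_error_mul_conjTranspose_add_filter_mul_conjTranspose_eq_one (hR : IsUnit R.det)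
    {ρ : ℝ} (hρ : ρ ≠ 0) (hRR : Rᴴ * R = Hᴴ * H + (ρ : ℂ)⁻¹ • (1 : Matrix ι ι ℂ)) :
    (ρ : ℂ) • (((Rᴴ)⁻¹ * Hᴴ * H - R) * ((Rᴴ)⁻¹ * Hᴴ * H - R)ᴴ) +
      (Rᴴ)⁻¹ * Hᴴ * ((Rᴴ)⁻¹ * Hᴴ)ᴴ = 1 := by
  have hR' : IsUnit (Rᴴ).det := by rw [det_conjTranspose]; exact hR.star
  have hHH : Hᴴ * H = Rᴴ * R - (ρ : ℂ)⁻¹ • 1 := eq_sub_of_add_eq hRR.symm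
  have herr : (Rᴴ)⁻¹ * Hᴴ * H - R = -((ρ : ℂ)⁻¹ • (Rᴴ)⁻¹) := by
    rw [Matrix.mul_assoc, hHH, Matrix.mul_sub, nonsing_inv_mul_cancel_left _ _ hR']
    simp
  have hFF : (Rᴴ)⁻¹ * Hᴴ * ((Rᴴ)⁻¹ * Hᴴ)ᴴ = 1 - (ρ : ℂ)⁻¹ • ((Rᴴ)⁻¹ * R⁻¹) := by
    calc
      _ = (Rᴴ)⁻¹ * (Hᴴ * H) * R⁻¹ := by
        simp [conjTranspose_nonsing_inv, Matrix.mul_assoc]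
      _ = _ := by
        rw [hHH, Matrix.mul_sub, nonsing_inv_mul_cancel_left _ _ hR', Matrix.sub_mul,
          mul_nonsing_inv _ hR]
        simp
  rw [herr, hFF]
  simp [conjTranspose_nonsing_inv, smul_smul, hρ]

lemma sq_mul_norm_sq_error_add_sq_mul_norm_sq_filter_eq {σs σw : ℝ} (hσs : σs ≠ 0) (hσw : σw ≠ 0)
    (hR : IsUnit R.det)
    (hRR : Rᴴ * R = Hᴴ * H + ((σs ^ 2 / σw ^ 2 : ℝ) : ℂ)⁻¹ • (1 : Matrix ι ι ℂ))
    (t : EuclideanSpace ℂ ι) :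
    σs ^ 2 * ‖WithLp.toLp 2 (((Rᴴ)⁻¹ * Hᴴ * H - R)ᴴ *ᵥ (t : ι → ℂ))‖ ^ 2 +
      σw ^ 2 * ‖WithLp.toLp 2 (((Rᴴ)⁻¹ * Hᴴ)ᴴ *ᵥ (t : ι → ℂ))‖ ^ 2 = σw ^ 2 * ‖t‖ ^ 2 := by
  have hcov := smul_error_mul_conjTranspose_add_filter_mul_conjTranspose_eq_one hR
    (ρ := σs ^ 2 / σw ^ 2) (by positivity) hRR
  have ht : ‖t‖ ^ 2 = (star (t : ι → ℂ) ⬝ᵥ (1 : Matrix ι ι ℂ) *ᵥ (t : ι → ℂ)).re := by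
    simpa using norm_sq_toLp_conjTranspose_mulVec (1 : Matrix ι ι ℂ) t
  rw [ht, ← hcov, norm_sq_toLp_conjTranspose_mulVec, norm_sq_toLp_conjTranspose_mulVec,
    add_mulVec, dotProduct_add, smul_mulVec, dotProduct_smul, smul_eq_mul, Complex.add_re,
    Complex.re_ofReal_mul]
  field_simp

theorem equivalent_noise_subGaussian_general (L : Submodule ℤ (EuclideanSpace ℂ ι))
    [DiscreteTopology L] {σs σw : ℝ} (hσs : 0 < σs) (hσw : 0 < σw) {ρ : ℝ}
    (hρ : ρ = σs ^ 2 / σw ^ 2) (hR : IsUnit R.det)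
    (hRR : Rᴴ * R = Hᴴ * H + (ρ : ℂ)⁻¹ • (1 : Matrix ι ι ℂ)) (t : EuclideanSpace ℂ ι) :
    (∑' x : L, Real.exp (-‖(x : EuclideanSpace ℂ ι)‖ ^ 2 / σs ^ 2 +
          (star (t : ι → ℂ) ⬝ᵥ ((Rᴴ)⁻¹ * Hᴴ * H - R) *ᵥ
            ((x : EuclideanSpace ℂ ι) : ι → ℂ)).re)) *
        Real.exp (σw ^ 2 * ‖WithLp.toLp 2 (((Rᴴ)⁻¹ * Hᴴ)ᴴ *ᵥ (t : ι → ℂ))‖ ^ 2 / 4) ≤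
      Real.exp (σw ^ 2 * ‖t‖ ^ 2 / 4) *
        ∑' x : L, Real.exp (-‖(x : EuclideanSpace ℂ ι)‖ ^ 2 / σs ^ 2) := by
  subst hρ
  have hsummable : Summable fun x : L => Real.exp (-‖(x : EuclideanSpace ℂ ι)‖ ^ 2 / σs ^ 2) := by
    simpa only [neg_mul, ← div_eq_inv_mul, ← neg_div] using
      summable_exp_neg_mul_norm_sq L (k := (σs ^ 2)⁻¹) (by positivity)
  rw [← sq_mul_norm_sq_error_add_sq_mul_norm_sq_filter_eq hσs.ne' hσw.ne' hR hRR t, add_div,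
    Real.exp_add, mul_right_comm]
  simp only [re_star_dotProduct_mulVec]
  gcongr
  exact tsum_exp_neg_norm_sq_div_add_inner_le hσs.ne' hsummable _

end EquivalentNoise

/-- **Sub-Gaussianity of the equivalent noise after MMSE-GDFE filtering.**
Let `Λ ⊂ ℂ^m` be a full-rank lattice, `σ_s, σ_w > 0`, `ρ = σ_s²/σ_w²`,
`H ∈ ℂ^{n×m}`, `R` invertible with `R†R = H†H + ρ⁻¹I`, and `F = R^{-†}H†`. Then for
all `t ∈ ℂ^m`,
`(∑_{x∈Λ} exp(−‖x‖²/σ_s² + Re(t†(FH−R)x))) · exp(σ_w²‖F†t‖²/4)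
  ≤ exp(σ_w²‖t‖²/4) · ∑_{x∈Λ} exp(−‖x‖²/σ_s²)`,
expressing that the equivalent noise `w' = (FH−R)x + Fw` is sub-Gaussian with
parameter `σ_w`. -/
theorem equivalent_noise_subGaussian
    (m n : ℕ)
    (L : Submodule ℤ (EuclideanSpace ℂ (Fin m))) [DiscreteTopology L]
    (hfull : Submodule.span ℝ (L : Set (EuclideanSpace ℂ (Fin m))) = ⊤)
    (σs σw : ℝ) (hσs : 0 < σs) (hσw : 0 < σw)
    (ρ : ℝ) (hρ : ρ = σs ^ 2 / σw ^ 2)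
    (H : Matrix (Fin n) (Fin m) ℂ)
    (R : Matrix (Fin m) (Fin m) ℂ) (hR : IsUnit R.det)
    (hRR : Rᴴ * R = Hᴴ * H + ((ρ : ℂ)⁻¹) • (1 : Matrix (Fin m) (Fin m) ℂ))
    (t : EuclideanSpace ℂ (Fin m)) :
    (∑' x : L, Real.exp (-‖(x : EuclideanSpace ℂ (Fin m))‖ ^ 2 / σs ^ 2 +
          (star (t : Fin m → ℂ) ⬝ᵥ ((Rᴴ)⁻¹ * Hᴴ * H - R) *ᵥ
            ((x : EuclideanSpace ℂ (Fin m)) : Fin m → ℂ)).re)) *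
        Real.exp (σw ^ 2 *
          ‖((WithLp.equiv 2 (Fin n → ℂ)).symm (((Rᴴ)⁻¹ * Hᴴ)ᴴ *ᵥ (t : Fin m → ℂ)))‖ ^ 2 / 4) ≤
      Real.exp (σw ^ 2 * ‖t‖ ^ 2 / 4) *
        ∑' x : L, Real.exp (-‖(x : EuclideanSpace ℂ (Fin m))‖ ^ 2 / σs ^ 2) :=
  equivalent_noise_subGaussian_general L hσs hσw hρ hR hRR t
end
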